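/- Let Q ⊆ ℝᵐ be a polyhedron with dim(Q) ≥ 4, equipped with an irredundant description, and suppose Q has a non-degenerate vertex, i.e., a vertex contained in exactly dim(Q) facets of Q. Then there exists a linear map π : ℝᵐ → ℝ^{dim(Q)−1} such that π(Q) is full-dimensional in ℝ^{dim(Q)−1} and, for some irredundant description of π(Q), C(π(Q)) ⊄ π(C(Q)). -/

import Mathlib

open Matrix

noncomputable section

/-- The polyhedron `{x : Ax = b, Bx ≤ d}`. -/
def polySet {p q n : Type*} [Fintype n] (A : Matrix p n ℝ) (b : p → ℝ)
    (B : Matrix q n ℝ) (d : q → ℝ) : Set (n → ℝ) :=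
  {x | A.mulVec x = b ∧ B.mulVec x ≤ d}

/-- The circuits of the linear description `Ax = b, Bx ≤ d`: nonzero kernel elements `g` of `A`
whose support of `Bg` is inclusion-minimal among nonzero kernel elements. -/
def circuits {p q n : Type*} [Fintype n] (A : Matrix p n ℝ) (B : Matrix q n ℝ) :
    Set (n → ℝ) :=
  {g | A.mulVec g = 0 ∧ g ≠ 0 ∧
    ∀ y : n → ℝ, A.mulVec y = 0 → y ≠ 0 →
      {i | B.mulVec y i ≠ 0} ⊆ {i | B.mulVec g i ≠ 0} →
      {i | B.mulVec g i ≠ 0} ⊆ {i | B.mulVec y i ≠ 0}}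

/-- A face of a polyhedron `P`: either `P` itself or the set of maximizers of a linear
functional over `P` whose supremum is finite and attained. -/
def IsFace {n : Type*} [Fintype n] (P F : Set (n → ℝ)) : Prop :=
  F = P ∨ ∃ (c : n → ℝ) (s : ℝ),
    (∀ y ∈ P, c ⬝ᵥ y ≤ s) ∧ (∃ y ∈ P, c ⬝ᵥ y = s) ∧ F = {x ∈ P | c ⬝ᵥ x = s}

/-- The dimension of the affine span of a set. -/
def spanDim {n : Type*} [Fintype n] (S : Set (n → ℝ)) : ℕ :=
  Module.finrank ℝ (affineSpan ℝ S).direction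

def IsVertex {n : Type*} [Fintype n] (P : Set (n → ℝ)) (v : n → ℝ) : Prop :=
  IsFace P {v}

def IsEdge {n : Type*} [Fintype n] (P F : Set (n → ℝ)) : Prop :=
  IsFace P F ∧ spanDim F = 1

/-- A nonzero vector lying in the direction space of the affine span of some edge of `P`. -/
def IsEdgeDirection {n : Type*} [Fintype n] (P : Set (n → ℝ)) (g : n → ℝ) : Prop :=
  g ≠ 0 ∧ ∃ F, IsEdge P F ∧ g ∈ (affineSpan ℝ F).direction

/-- A facet: a face whose affine span has dimension `dim P - 1`. -/
def IsFacet {n : Type*} [Fintype n] (P F : Set (n → ℝ)) : Prop :=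
  IsFace P F ∧ spanDim F + 1 = spanDim P

/-- A pointed set: contains no affine line. -/
def PointedSet {n : Type*} [Fintype n] (P : Set (n → ℝ)) : Prop :=
  ∀ x v : n → ℝ, (∀ t : ℝ, x + t • v ∈ P) → v = 0

/-- `Ax = b, Bx ≤ d` is an irredundant description of `P`. -/
def Irredundant {p q n : Type*} [Fintype n] (A : Matrix p n ℝ) (b : p → ℝ)
    (B : Matrix q n ℝ) (d : q → ℝ) (P : Set (n → ℝ)) : Prop :=
  P = polySet A b B d ∧
  {x | A.mulVec x = b} = (affineSpan ℝ P : Set (n → ℝ)) ∧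
  ∀ i, IsFacet P {x ∈ P | B.mulVec x i = d i}

/-- A basic solution of the system `Ax = b, Bx ≤ d`: satisfies the equalities, and the rows of
`A` together with the tight rows of `B` span the whole space. -/
def IsBasicSolution {p q n : Type*} [Fintype n] (A : Matrix p n ℝ) (b : p → ℝ)
    (B : Matrix q n ℝ) (d : q → ℝ) (g : n → ℝ) : Prop :=
  A.mulVec g = b ∧
  Submodule.span ℝ (Set.range (fun i => A i) ∪
    (fun i => B i) '' {i | B.mulVec g i = d i}) = ⊤

/-!
At a non-degenerate vertex `v` the slacks of the tight inequalities are linear coordinates `Φ` in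
which the cone of feasible directions is the nonnegative orthant. Let `π` collapse the line through
a direction `z`, and let `ζ = Φ z`. Whenever `ζ i > 0 > ζ j`, the functional `ζ j * x i - ζ i * x j`
is nonpositive on the orthant and vanishes at `z`, so it descends to the image, where it supports a
facet at `π v`; hence every irredundant description of `π Q` has a row proportional to it.
If both `S` and `Sᶜ` contain positive and negative coordinates of `ζ`, these rows force the
restriction of `ζ` to `S` to map to a circuit of `π Q`.

With at least four coordinates, let `ζ` take the values `1, ρ` on two coordinates in `S` and again
`1, ρ` on two coordinates outside `S`, where `ρ < 0`. A direction that projects to the circuit above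
has coordinate ratio `ρ` on one of these two pairs. Since `Q` has finitely many circuits up to
scaling, some `ρ` is not such a ratio for any of them.
-/

section LinearInequalities

variable {ι : Type*} [Finite ι]

lemma exists_pos_forall_mul_le_iff {a δ : ι → ℝ} (hδ : ∀ i, 0 ≤ δ i) :
    (∃ ε : ℝ, 0 < ε ∧ ∀ i, ε * a i ≤ δ i) ↔ ∀ i, δ i = 0 → a i ≤ 0 := by
  constructor
  · rintro ⟨ε, hε, h⟩ i hi
    exact nonpos_of_mul_nonpos_right (hi ▸ h i) hε
  · intro h
    have small : ∀ᶠ ε in nhdsWithin (0 : ℝ) (Set.Ioi 0), ∀ i, ε * a i ≤ δ i := by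
      rw [Filter.eventually_all]
      intro i
      rcases (hδ i).eq_or_lt with hi | hi
      · filter_upwards [self_mem_nhdsWithin] with ε hε
        rw [← hi]
        exact mul_nonpos_of_nonneg_of_nonpos (le_of_lt hε) (h i hi.symm)
      · have lim : Filter.Tendsto (fun ε : ℝ => ε * a i) (nhdsWithin 0 (Set.Ioi 0)) (nhds 0) := by
          simpa using ((continuous_mul_const (a i)).tendsto 0).mono_left nhdsWithin_le_nhds
        filter_upwards [lim.eventually (gt_mem_nhds hi)] with ε hε using hε.le
    obtain ⟨ε, hle, hε⟩ := (small.and self_mem_nhdsWithin).exists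
    exact ⟨ε, hε, hle⟩

lemma exists_forall_mul_le_iff {β γ : ι → ℝ} :
    (∃ t : ℝ, ∀ i, β i * t ≤ γ i) ↔
      (∀ i, β i = 0 → 0 ≤ γ i) ∧
        ∀ i j, 0 < β i → β j < 0 → β j * γ i ≤ β i * γ j := by
  constructor
  · rintro ⟨t, ht⟩
    refine ⟨fun i hi => by simpa [hi] using ht i, fun i j hi hj => ?_⟩
    calc β j * γ i ≤ β j * (β i * t) := mul_le_mul_of_nonpos_left (ht i) hj.le
      _ = β i * (β j * t) := by ring
      _ ≤ β i * γ j := mul_le_mul_of_nonneg_left (ht j) hi.le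
  · rintro ⟨hzero, hpair⟩
    obtain ⟨t, hupper, hlower⟩ : ∃ t : ℝ,
        (∀ i, 0 < β i → t ≤ γ i / β i) ∧ ∀ j, β j < 0 → γ j / β j ≤ t := by
      have hle : ∀ i j, 0 < β i → β j < 0 → γ j / β j ≤ γ i / β i := by
        intro i j hi hj
        rw [div_le_iff_of_neg hj, div_mul_eq_mul_div, div_le_iff₀ hi]
        linarith [hpair i j hi hj]
      by_cases hneg : ∃ j, β j < 0
      · obtain ⟨j, hj, hmax⟩ :=
          Set.exists_max_image {j | β j < 0} (fun j => γ j / β j) (Set.toFinite _) hneg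
        exact ⟨γ j / β j, fun i hi => hle i j hi hj, hmax⟩
      · push Not at hneg
        obtain ⟨t, ht⟩ := (Set.finite_range fun i => γ i / β i).bddBelow
        exact ⟨t, fun i _ => ht ⟨i, rfl⟩, fun j hj => absurd hj (hneg j).not_gt⟩
    refine ⟨t, fun i => ?_⟩
    rcases lt_trichotomy (β i) 0 with hi | hi | hi
    · rw [mul_comm]
      exact (div_le_iff_of_neg hi).1 (hlower i hi)
    · simpa [hi] using hzero i hi
    · rw [mul_comm]
      exact (le_div_iff₀ hi).1 (hupper i hi)

lemma exists_forall_lt_of_convex {E : Type*} [AddCommGroup E] [Module ℝ E] {S : Set E}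
    (hS : Convex ℝ S) (hne : S.Nonempty) (a : ι → Module.Dual ℝ E) (e : ι → ℝ)
    (hle : ∀ x ∈ S, ∀ i, a i x ≤ e i) (hlt : ∀ i, ∃ x ∈ S, a i x < e i) :
    ∃ x ∈ S, ∀ i, a i x < e i := by
  cases nonempty_fintype ι
  cases isEmpty_or_nonempty ι
  · exact hne.imp fun x hx => ⟨hx, isEmptyElim⟩
  choose x hxS hxlt using hlt
  have card_pos : (0 : ℝ) < Fintype.card ι := by exact_mod_cast Fintype.card_pos
  have weight_sum : ∑ _i : ι, (Fintype.card ι : ℝ)⁻¹ = 1 := by simp [card_pos.ne']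
  refine ⟨∑ i, (Fintype.card ι : ℝ)⁻¹ • x i,
    hS.sum_mem (fun _ _ => by positivity) weight_sum fun i _ => hxS i, fun j => ?_⟩
  calc a j (∑ i, (Fintype.card ι : ℝ)⁻¹ • x i) = ∑ i, (Fintype.card ι : ℝ)⁻¹ * a j (x i) := by
        simp
    _ < ∑ _i : ι, (Fintype.card ι : ℝ)⁻¹ * e j := by
        refine Finset.sum_lt_sum (fun i _ => ?_) ⟨j, Finset.mem_univ j, ?_⟩
        · exact mul_le_mul_of_nonneg_left (hle _ (hxS i) j) (by positivity)
        · exact mul_lt_mul_of_pos_left (hxlt j) (by positivity)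
    _ = e j := by rw [← Finset.sum_mul, weight_sum, one_mul]

end LinearInequalities

/-- An H-polyhedron: the intersection of finitely many closed half-spaces `a i x ≤ e i`. -/
def IsHPolyhedron {E : Type*} [AddCommGroup E] [Module ℝ E] (S : Set E) : Prop :=
  ∃ (k : ℕ) (a : Fin k → Module.Dual ℝ E) (e : Fin k → ℝ), S = {x | ∀ i, a i x ≤ e i}

section HPolyhedron

variable {E F : Type*} [AddCommGroup E] [Module ℝ E] [AddCommGroup F] [Module ℝ F]

lemma isHPolyhedron_setOf_forall_le {ι : Type*} [Finite ι] (a : ι → Module.Dual ℝ E)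
    (e : ι → ℝ) : IsHPolyhedron {x | ∀ i, a i x ≤ e i} := by
  obtain ⟨k, ⟨index⟩⟩ := Finite.exists_equiv_fin ι
  refine ⟨k, a ∘ index.symm, e ∘ index.symm, ?_⟩
  ext x
  simp [index.symm.surjective.forall]

lemma isHPolyhedron_setOf_eq [FiniteDimensional ℝ F] (f : E →ₗ[ℝ] F) (y : F) :
    IsHPolyhedron {x | f x = y} := by
  let b := Module.finBasis ℝ F
  convert isHPolyhedron_setOf_forall_le
    (Sum.elim (fun i => b.coord i ∘ₗ f) fun i => -(b.coord i ∘ₗ f))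
    (Sum.elim (fun i => b.coord i y) fun i => -b.coord i y) using 1
  ext x
  simp [b.ext_elem_iff, le_antisymm_iff, forall_and]

namespace IsHPolyhedron

lemma inter {S T : Set E} (hS : IsHPolyhedron S) (hT : IsHPolyhedron T) :
    IsHPolyhedron (S ∩ T) := by
  obtain ⟨k, a, e, rfl⟩ := hS
  obtain ⟨l, a', e', rfl⟩ := hT
  convert isHPolyhedron_setOf_forall_le (Sum.elim a a') (Sum.elim e e') using 1
  ext x
  simp

lemma preimage {S : Set F} (hS : IsHPolyhedron S) (f : E →ₗ[ℝ] F) : IsHPolyhedron (f ⁻¹' S) := by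
  obtain ⟨k, a, e, rfl⟩ := hS
  exact ⟨k, fun i => a i ∘ₗ f, e, rfl⟩

-- Fourier–Motzkin elimination of the last coordinate.
lemma image_fst {S : Set (E × ℝ)} (hS : IsHPolyhedron S) : IsHPolyhedron (Prod.fst '' S) := by
  obtain ⟨k, a, e, rfl⟩ := hS
  let α (i : Fin k) : Module.Dual ℝ E := a i ∘ₗ LinearMap.inl ℝ E ℝ
  let β (i : Fin k) : ℝ := a i (0, 1)
  have split (i : Fin k) (x : E) (t : ℝ) : a i (x, t) = α i x + β i * t := by
    have : ((x, t) : E × ℝ) = (x, 0) + t • (0, 1) := by simp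
    rw [this, map_add, map_smul, smul_eq_mul, mul_comm]
    rfl
  convert (isHPolyhedron_setOf_forall_le (fun i : {i // β i = 0} => α i) fun i => e i).inter
    (isHPolyhedron_setOf_forall_le
      (fun p : {p : Fin k × Fin k // 0 < β p.1 ∧ β p.2 < 0} =>
        β p.1.1 • α p.1.2 - β p.1.2 • α p.1.1)
      fun p => β p.1.1 * e p.1.2 - β p.1.2 * e p.1.1) using 1
  ext x
  have fiber : x ∈ Prod.fst '' {y : E × ℝ | ∀ i, a i y ≤ e i} ↔
      ∃ t, ∀ i, β i * t ≤ e i - α i x := by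
    simp only [Set.mem_image, Prod.exists, exists_and_right, exists_eq_right, Set.mem_ofPred_eq,
      split, ← le_sub_iff_add_le']
  rw [fiber, exists_forall_mul_le_iff]
  refine and_congr (by simp) ⟨fun h p => ?_, fun h i j hi hj => ?_⟩
  · have := h p.1.1 p.1.2 p.2.1 p.2.2
    simp only [LinearMap.sub_apply, LinearMap.smul_apply, smul_eq_mul]
    linarith
  · have := h ⟨(i, j), hi, hj⟩
    simp only [LinearMap.sub_apply, LinearMap.smul_apply, smul_eq_mul] at this
    linarith

lemma image_fst_pi {m : ℕ} {S : Set (E × (Fin m → ℝ))} (hS : IsHPolyhedron S) :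
    IsHPolyhedron (Prod.fst '' S) := by
  induction m with
  | zero =>
    convert hS.preimage (LinearMap.inl ℝ E (Fin 0 → ℝ)) using 1
    ext x
    simp [Fin.exists_fin_zero_pi]
  | succ m ih =>
    let regroup : (E × (Fin m → ℝ)) × ℝ →ₗ[ℝ] E × (Fin (m + 1) → ℝ) :=
      (LinearMap.fst ℝ _ _ ∘ₗ LinearMap.fst ℝ _ _).prod
        ((Fin.consLinearEquiv ℝ fun _ => ℝ).toLinearMap ∘ₗ
          (LinearMap.snd ℝ _ _).prod (LinearMap.snd ℝ _ _ ∘ₗ LinearMap.fst ℝ _ _))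
    convert ih (hS.preimage regroup).image_fst using 1
    ext x
    simp [regroup, Fin.exists_fin_succ_pi, exists_comm (α := ℝ), Fin.consLinearEquiv,
      Fin.consEquiv]

lemma image [FiniteDimensional ℝ E] [FiniteDimensional ℝ F] {S : Set E} (hS : IsHPolyhedron S)
    (f : E →ₗ[ℝ] F) : IsHPolyhedron (f '' S) := by
  let coords := (Module.finBasis ℝ E).equivFun.symm
  let point : F × (Fin (Module.finrank ℝ E) → ℝ) →ₗ[ℝ] E := coords ∘ₗ LinearMap.snd ℝ _ _
  convert ((isHPolyhedron_setOf_eq (f ∘ₗ point - LinearMap.fst ℝ _ _) 0).inter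
    (hS.preimage point)).image_fst_pi using 1
  ext y
  simp [point, sub_eq_zero, and_comm, coords.surjective.exists]

end IsHPolyhedron

end HPolyhedron

lemma isHPolyhedron_polySet {p q n : Type*} [Finite p] [Finite q] [Fintype n] (A : Matrix p n ℝ)
    (b : p → ℝ) (B : Matrix q n ℝ) (d : q → ℝ) : IsHPolyhedron (polySet A b B d) := by
  cases nonempty_fintype p
  convert (isHPolyhedron_setOf_eq A.mulVecLin b).inter (isHPolyhedron_setOf_forall_le
    (fun i => LinearMap.proj i ∘ₗ B.mulVecLin) d) using 1
  ext x
  simp [polySet, Pi.le_def]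

section FeasibleDirections

variable {E F : Type*} [AddCommGroup E] [Module ℝ E] [AddCommGroup F] [Module ℝ F]

lemma direction_affineSpan_le_ker {f : E →ₗ[ℝ] F} {y : F} {S : Set E} (hS : ∀ x ∈ S, f x = y) :
    (affineSpan ℝ S).direction ≤ LinearMap.ker f := by
  rw [direction_affineSpan, vectorSpan_def, Submodule.span_le]
  rintro _ ⟨x, hx, x', hx', rfl⟩
  simp [hS x hx, hS x' hx']

/-- The directions `u` along which one can leave `v` and stay in `S` for a positive time. For a
convex set `S` and `v ∈ S` this is the cone of feasible directions of `S` at `v`. -/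
def feasibleDirections (S : Set E) (v : E) : Set E := {u | ∃ ε : ℝ, 0 < ε ∧ v + ε • u ∈ S}

lemma mem_direction_of_mem_feasibleDirections {S : Set E} {v u : E} (hv : v ∈ S)
    (hu : u ∈ feasibleDirections S v) : u ∈ (affineSpan ℝ S).direction := by
  obtain ⟨ε, hε, hmem⟩ := hu
  have := AffineSubspace.vsub_mem_direction (mem_affineSpan ℝ hmem) (mem_affineSpan ℝ hv)
  rwa [vsub_eq_sub, add_sub_cancel_left, Submodule.smul_mem_iff _ hε.ne'] at this

lemma mem_feasibleDirections_sep_eq_iff {S : Set E} {f : E →ₗ[ℝ] F} {y : F} {v u : E}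
    (hv : f v = y) :
    u ∈ feasibleDirections {x ∈ S | f x = y} v ↔ u ∈ feasibleDirections S v ∧ f u = 0 := by
  subst hv
  simp only [feasibleDirections, Set.mem_ofPred_eq, ← exists_and_right]
  refine exists_congr fun ε => ⟨fun ⟨hε, hmem, hf⟩ => ?_, fun ⟨⟨hε, hmem⟩, hf⟩ => ?_⟩
  · exact ⟨⟨hε, hmem⟩, by simpa [hε.ne'] using hf⟩
  · exact ⟨hε, hmem, by simp [hf]⟩

lemma map_mem_feasibleDirections {S : Set E} {v u : E} (hu : u ∈ feasibleDirections S v)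
    (f : E →ₗ[ℝ] F) : f u ∈ feasibleDirections (f '' S) (f v) := by
  obtain ⟨ε, hε, hmem⟩ := hu
  exact ⟨ε, hε, v + ε • u, hmem, by simp⟩

lemma mem_feasibleDirections_setOf_forall_le_iff {ι : Type*} [Finite ι] {a : ι → Module.Dual ℝ E}
    {e : ι → ℝ} {v u : E} (hv : ∀ i, a i v ≤ e i) :
    u ∈ feasibleDirections {x | ∀ i, a i x ≤ e i} v ↔ ∀ i, a i v = e i → a i u ≤ 0 := by
  have := exists_pos_forall_mul_le_iff (a := fun i => a i u) fun i => sub_nonneg.2 (hv i)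
  simp only [le_sub_iff_add_le', sub_eq_zero] at this
  simpa [feasibleDirections, eq_comm] using this

end FeasibleDirections

section Facets

variable {n : Type*} [Fintype n] {P : Set (n → ℝ)}

lemma isFace_setOf_eq {f : Module.Dual ℝ (n → ℝ)} {s : ℝ} (hle : ∀ x ∈ P, f x ≤ s)
    (hex : ∃ x ∈ P, f x = s) : IsFace P {x ∈ P | f x = s} := by
  classical
  obtain ⟨c, rfl⟩ := (dotProductEquiv ℝ n).surjective f
  exact Or.inr ⟨c, s, hle, hex, rfl⟩

lemma isFacet_of_ker_le_direction (hspan : affineSpan ℝ P = ⊤) {f : Module.Dual ℝ (n → ℝ)}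
    (hf : f ≠ 0) {s : ℝ} (hle : ∀ x ∈ P, f x ≤ s) (hex : ∃ x ∈ P, f x = s)
    (hker : LinearMap.ker f ≤ (affineSpan ℝ {x ∈ P | f x = s}).direction) :
    IsFacet P {x ∈ P | f x = s} := by
  refine ⟨isFace_setOf_eq hle hex, ?_⟩
  have direction_eq : (affineSpan ℝ {x ∈ P | f x = s}).direction = LinearMap.ker f :=
    (direction_affineSpan_le_ker fun x hx => hx.2).antisymm hker
  rw [spanDim, spanDim, direction_eq, hspan, AffineSubspace.direction_top, finrank_top]
  exact Module.Dual.finrank_ker_add_one_of_ne_zero hf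

end Facets

section IrredundantFamily

variable {E : Type*} [AddCommGroup E] [Module ℝ E]

lemma IsHPolyhedron.exists_irredundant_family {S : Set E} (hS : IsHPolyhedron S) :
    ∃ (k : ℕ) (a : Fin k → Module.Dual ℝ E) (e : Fin k → ℝ), S = {x | ∀ i, a i x ≤ e i} ∧
      ∀ i, ∃ y, e i < a i y ∧ ∀ j ≠ i, a j y ≤ e j := by
  obtain ⟨k, a, e, rfl⟩ := hS
  induction k with
  | zero => exact ⟨0, a, e, rfl, finZeroElim⟩
  | succ k ih =>
    by_cases hviolated : ∀ i, ∃ y, e i < a i y ∧ ∀ j ≠ i, a j y ≤ e j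
    · exact ⟨k + 1, a, e, rfl, hviolated⟩
    · push Not at hviolated
      obtain ⟨i, hi⟩ := hviolated
      have drop : {x | ∀ j, a j x ≤ e j} = {x | ∀ j, a (i.succAbove j) x ≤ e (i.succAbove j)} := by
        ext x
        refine ⟨fun hx j => hx _, fun hx => ?_⟩
        by_contra hxi
        obtain ⟨j, hji, hj⟩ := hi x (not_le.1 fun h =>
          hxi ((Fin.forall_iff_succAbove i).2 ⟨h, hx⟩))
        obtain ⟨j, rfl⟩ := Fin.exists_succAbove_eq hji
        exact (hx j).not_gt hj
      rw [drop]
      exact ih _ _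

variable {ι : Type*} [Finite ι] {a : ι → Module.Dual ℝ E} {e : ι → ℝ}

lemma exists_forall_lt_of_forall_exists_violated
    (hspan : affineSpan ℝ {x | ∀ i, a i x ≤ e i} = ⊤)
    (hviolated : ∀ i, ∃ y, e i < a i y ∧ ∀ j ≠ i, a j y ≤ e j) : ∃ x, ∀ i, a i x < e i := by
  have hne : {x | ∀ i, a i x ≤ e i}.Nonempty := by
    rw [← affineSpan_nonempty ℝ, hspan]
    exact Set.univ_nonempty
  have convex : Convex ℝ {x | ∀ i, a i x ≤ e i} := by
    rw [Set.ofPred_forall]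
    exact convex_iInter fun i => convex_halfSpace_le (a i).isLinear (e i)
  have hle : ∀ x ∈ {x | ∀ i, a i x ≤ e i}, ∀ i, a i x ≤ e i := fun x hx => hx
  obtain ⟨x, -, hx⟩ := exists_forall_lt_of_convex convex hne a e hle fun i => by
    by_contra! hge
    have ha : a i = 0 := by
      have := direction_affineSpan_le_ker fun x hx => (hle x hx i).antisymm (hge x hx)
      rwa [hspan, AffineSubspace.direction_top, top_le_iff, LinearMap.ker_eq_top] at this
    obtain ⟨x, hx⟩ := hne
    obtain ⟨y, hy, -⟩ := hviolated i
    have := hx i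
    simp only [ha, LinearMap.zero_apply] at this hy
    linarith
  exact ⟨x, hx⟩

lemma exists_eq_and_forall_ne_lt_of_forall_exists_violated
    (hspan : affineSpan ℝ {x | ∀ i, a i x ≤ e i} = ⊤)
    (hviolated : ∀ i, ∃ y, e i < a i y ∧ ∀ j ≠ i, a j y ≤ e j) (i : ι) :
    ∃ z, a i z = e i ∧ ∀ j ≠ i, a j z < e j := by
  obtain ⟨w, hw⟩ := exists_forall_lt_of_forall_exists_violated hspan hviolated
  obtain ⟨y, hyi, hy⟩ := hviolated i
  have hpos : 0 < a i y - a i w := by linarith [hw i]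
  let t := (e i - a i w) / (a i y - a i w)
  have ht0 : 0 < t := div_pos (sub_pos.2 (hw i)) hpos
  have ht1 : t < 1 := (div_lt_one hpos).2 (by linarith)
  refine ⟨w + t • (y - w), ?_, fun j hj => ?_⟩
  · simp [t, hpos.ne']
  · calc a j (w + t • (y - w)) = (1 - t) * a j w + t * a j y := by
          simp only [map_add, map_smul, map_sub, smul_eq_mul]
          ring
      _ < (1 - t) * e j + t * e j :=
          add_lt_add_of_lt_of_le (mul_lt_mul_of_pos_left (hw j) (sub_pos.2 ht1))
            (mul_le_mul_of_nonneg_left (hy j hj) ht0.le)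
      _ = e j := by ring

end IrredundantFamily

lemma isFacet_of_forall_exists_violated {n ι : Type*} [Fintype n] [Finite ι]
    {a : ι → Module.Dual ℝ (n → ℝ)} {e : ι → ℝ}
    (hspan : affineSpan ℝ {x | ∀ i, a i x ≤ e i} = ⊤)
    (hviolated : ∀ i, ∃ y, e i < a i y ∧ ∀ j ≠ i, a j y ≤ e j) (i : ι) :
    IsFacet {x | ∀ i, a i x ≤ e i} {x ∈ {x | ∀ i, a i x ≤ e i} | a i x = e i} := by
  obtain ⟨z, hzi, hz⟩ := exists_eq_and_forall_ne_lt_of_forall_exists_violated hspan hviolated i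
  have hzP (j) : a j z ≤ e j := by
    rcases eq_or_ne j i with rfl | hj
    exacts [hzi.le, (hz j hj).le]
  have ha : a i ≠ 0 := by
    obtain ⟨y, hy, -⟩ := hviolated i
    intro h
    simp only [h, LinearMap.zero_apply] at hzi hy
    linarith
  refine isFacet_of_ker_le_direction hspan ha (fun x hx => hx i) ⟨z, hzP, hzi⟩ fun u hu => ?_
  refine mem_direction_of_mem_feasibleDirections (v := z) ⟨hzP, hzi⟩
    ((mem_feasibleDirections_sep_eq_iff hzi).2 ⟨?_, hu⟩)
  refine (mem_feasibleDirections_setOf_forall_le_iff hzP).2 fun j hj => ?_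
  obtain rfl : j = i := by
    by_contra hji
    exact (hz j hji).ne hj
  exact le_of_eq hu

lemma IsHPolyhedron.exists_irredundant {n : Type*} [Fintype n] {P : Set (n → ℝ)}
    (hP : IsHPolyhedron P) (hspan : affineSpan ℝ P = ⊤) :
    ∃ (k : ℕ) (B : Matrix (Fin k) n ℝ) (d : Fin k → ℝ),
      Irredundant (0 : Matrix (Fin 0) n ℝ) 0 B d P := by
  classical
  obtain ⟨k, a, e, rfl, hviolated⟩ := hP.exists_irredundant_family
  let B : Matrix (Fin k) n ℝ := fun i => (dotProductEquiv ℝ n).symm (a i)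
  have B_mulVec (x : n → ℝ) (i : Fin k) : (B *ᵥ x) i = a i x :=
    LinearMap.congr_fun ((dotProductEquiv ℝ n).apply_symm_apply (a i)) x
  refine ⟨k, B, e, ?_, ?_, fun i => ?_⟩
  · ext x
    simp [polySet, Pi.le_def, B_mulVec]
  · simp [hspan]
  · simp only [B_mulVec]
    exact isFacet_of_forall_exists_violated hspan hviolated i

section Faces

variable {n : Type*} [Fintype n] {P F G : Set (n → ℝ)} {x : n → ℝ}

lemma IsFace.mem_of_mem_affineSpan (hF : IsFace P F) (hxP : x ∈ P) (hx : x ∈ affineSpan ℝ F) :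
    x ∈ F := by
  rcases hF with rfl | ⟨c, s, -, ⟨y, hyP, hy⟩, rfl⟩
  · exact hxP
  · have const : ∀ w ∈ {w ∈ P | c ⬝ᵥ w = s}, dotProductBilin ℝ ℝ c w = s := fun w hw => hw.2
    have hker : dotProductBilin ℝ ℝ c (x - y) = 0 :=
      direction_affineSpan_le_ker const
        (AffineSubspace.vsub_mem_direction hx (mem_affineSpan ℝ ⟨hyP, hy⟩))
    refine ⟨hxP, ?_⟩
    rw [map_sub, sub_eq_zero] at hker
    exact hker.trans hy

lemma IsFace.subset (hF : IsFace P F) : F ⊆ P := by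
  rcases hF with rfl | ⟨c, s, -, -, rfl⟩
  exacts [subset_rfl, Set.sep_subset _ _]

lemma IsFacet.nonempty (hF : IsFacet P F) : F.Nonempty := by
  rcases hF.1 with rfl | ⟨c, s, -, ⟨y, hyP, hy⟩, rfl⟩
  · exact absurd hF.2 (by omega)
  · exact ⟨y, hyP, hy⟩

lemma IsFacet.eq_of_subset (hF : IsFacet P F) (hG : IsFacet P G) (hFG : F ⊆ G) : F = G := by
  refine hFG.antisymm fun x hx => hF.1.mem_of_mem_affineSpan (hG.1.subset hx) ?_
  have hdim : spanDim F = spanDim G := by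
    have := hF.2
    have := hG.2
    omega
  have hdir := Submodule.eq_of_le_of_finrank_eq
    (AffineSubspace.direction_le (affineSpan_mono ℝ hFG)) hdim
  rw [AffineSubspace.eq_of_direction_eq_of_nonempty_of_le hdir
    ((affineSpan_nonempty ℝ).2 hF.nonempty)
    (affineSpan_mono ℝ hFG)]
  exact mem_affineSpan ℝ hx

end Faces

namespace Irredundant

variable {p q n : Type*} [Fintype n] {A : Matrix p n ℝ} {b : p → ℝ} {B : Matrix q n ℝ} {d : q → ℝ}
  {Q F : Set (n → ℝ)} {v u : n → ℝ}

lemma mem_iff (hQ : Irredundant A b B d Q) {x : n → ℝ} :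
    x ∈ Q ↔ A *ᵥ x = b ∧ ∀ i, (B *ᵥ x) i ≤ d i := by
  rw [hQ.1]
  rfl

lemma direction_eq (hQ : Irredundant A b B d Q) (hv : v ∈ Q) :
    (affineSpan ℝ Q).direction = LinearMap.ker A.mulVecLin := by
  ext x
  rw [← AffineSubspace.vadd_mem_iff_mem_direction x (mem_affineSpan ℝ hv), ← SetLike.mem_coe,
    ← hQ.2.1]
  simp [mulVec_add, (hQ.mem_iff.1 hv).1]

lemma mulVec_eq_zero (hQ : Irredundant A b B d Q) (hspan : affineSpan ℝ Q = ⊤) (x : n → ℝ) :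
    A *ᵥ x = 0 := by
  have solves (x : n → ℝ) : A *ᵥ x = b := by
    have : x ∈ (affineSpan ℝ Q : Set (n → ℝ)) := by simp [hspan]
    rwa [← hQ.2.1] at this
  rw [solves, ← solves 0, mulVec_zero]

lemma sep_ne (hQ : Irredundant A b B d Q) (i : q) : {x ∈ Q | (B *ᵥ x) i = d i} ≠ Q := by
  intro h
  have := (hQ.2.2 i).2
  rw [h] at this
  omega

lemma convex (hQ : Irredundant A b B d Q) : Convex ℝ Q := by
  rw [hQ.1, polySet, Set.ofPred_and]
  exact ((convex_singleton b).linear_preimage A.mulVecLin).inter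
    ((convex_Iic d).linear_preimage B.mulVecLin)

variable [Finite q]

lemma mem_feasibleDirections_iff (hQ : Irredundant A b B d Q) (hv : v ∈ Q) :
    u ∈ feasibleDirections Q v ↔ A *ᵥ u = 0 ∧ ∀ i, (B *ᵥ v) i = d i → (B *ᵥ u) i ≤ 0 := by
  obtain ⟨hAv, hBv⟩ := hQ.mem_iff.1 hv
  have Q_eq : Q = {x ∈ {x | ∀ i, (LinearMap.proj i ∘ₗ B.mulVecLin) x ≤ d i} |
      A.mulVecLin x = b} := by
    ext x
    exact hQ.mem_iff.trans and_comm
  rw [Q_eq, mem_feasibleDirections_sep_eq_iff hAv, mem_feasibleDirections_setOf_forall_le_iff hBv,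
    and_comm]
  rfl

lemma exists_forall_lt_of_subset (hQ : Irredundant A b B d Q) (hFQ : F ⊆ Q)
    (hF : Convex ℝ F) (hne : F.Nonempty) (hlt : ∀ i, ∃ x ∈ F, (B *ᵥ x) i ≠ d i) :
    ∃ x ∈ F, ∀ i, (B *ᵥ x) i < d i :=
  exists_forall_lt_of_convex hF hne (fun i => LinearMap.proj i ∘ₗ B.mulVecLin) d
    (fun _ hx => (hQ.mem_iff.1 (hFQ hx)).2) fun i =>
      (hlt i).imp fun _ ⟨hx, hne⟩ => ⟨hx, ((hQ.mem_iff.1 (hFQ hx)).2 i).lt_of_ne hne⟩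

lemma exists_forall_lt (hQ : Irredundant A b B d Q) (hne : Q.Nonempty) :
    ∃ x ∈ Q, ∀ i, (B *ᵥ x) i < d i := by
  refine hQ.exists_forall_lt_of_subset subset_rfl hQ.convex hne fun i => ?_
  by_contra! h
  exact hQ.sep_ne i (Set.sep_eq_self_iff_mem_true.2 h)

-- A point of `F` at which no inequality is tight can be moved in every direction of `ker A`, so a
-- functional exposing `F` would be constant on `Q`.
lemma exists_subset_row_of_isFacet (hQ : Irredundant A b B d Q) (hF : IsFacet Q F) :
    ∃ i, F ⊆ {x ∈ Q | (B *ᵥ x) i = d i} := by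
  rcases hF.1 with rfl | ⟨c, s, hle, hex, rfl⟩
  · exact absurd hF.2 (by omega)
  by_contra! hnot
  have hlt (i) : ∃ x ∈ {x ∈ Q | c ⬝ᵥ x = s}, (B *ᵥ x) i ≠ d i := by
    obtain ⟨x, hx, hxi⟩ := Set.not_subset.1 (hnot i)
    exact ⟨x, hx, fun h => hxi ⟨hx.1, h⟩⟩
  have convexF : Convex ℝ {x ∈ Q | c ⬝ᵥ x = s} :=
    hQ.convex.inter ((convex_singleton s).linear_preimage (dotProductBilin ℝ ℝ c))
  obtain ⟨x, ⟨hxQ, hxs⟩, hx⟩ := hQ.exists_forall_lt_of_subset (Set.sep_subset _ _) convexF hex hlt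
  have nonpos (u) (hu : A *ᵥ u = 0) : c ⬝ᵥ u ≤ 0 := by
    obtain ⟨ε, hε, hmem⟩ :=
      (hQ.mem_feasibleDirections_iff hxQ).2 ⟨hu, fun i hi => absurd hi (hx i).ne⟩
    have := hle _ hmem
    rw [dotProduct_add, hxs, dotProduct_smul, smul_eq_mul] at this
    exact nonpos_of_mul_nonpos_right (by linarith) hε
  have hFQ : {x ∈ Q | c ⬝ᵥ x = s} = Q := by
    refine Set.sep_eq_self_iff_mem_true.2 fun y hy => (hle y hy).antisymm ?_
    have := nonpos (x - y) (by
      rw [mulVec_sub, (hQ.mem_iff.1 hxQ).1, (hQ.mem_iff.1 hy).1, sub_self])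
    rw [dotProduct_sub, hxs] at this
    linarith
  have := hF.2
  rw [hFQ] at this
  omega

lemma exists_row_eq_of_isFacet (hQ : Irredundant A b B d Q) (hF : IsFacet Q F) :
    ∃ i, F = {x ∈ Q | (B *ᵥ x) i = d i} := by
  obtain ⟨i, hi⟩ := hQ.exists_subset_row_of_isFacet hF
  exact ⟨i, hF.eq_of_subset (hQ.2.2 i) hi⟩

lemma exists_mulVec_neg (hQ : Irredundant A b B d Q) (hv : v ∈ Q) :
    ∃ w, A *ᵥ w = 0 ∧ ∀ i, (B *ᵥ v) i = d i → (B *ᵥ w) i < 0 := by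
  obtain ⟨x, hxQ, hx⟩ := hQ.exists_forall_lt ⟨v, hv⟩
  refine ⟨x - v, ?_, fun i hi => ?_⟩
  · rw [mulVec_sub, (hQ.mem_iff.1 hxQ).1, (hQ.mem_iff.1 hv).1, sub_self]
  · rw [mulVec_sub, Pi.sub_apply, hi]
    exact sub_neg.2 (hx i)

lemma mem_direction_row_iff (hQ : Irredundant A b B d Q) (hv : v ∈ Q) {i : q}
    (hi : (B *ᵥ v) i = d i) :
    u ∈ (affineSpan ℝ {x ∈ Q | (B *ᵥ x) i = d i}).direction ↔ A *ᵥ u = 0 ∧ (B *ᵥ u) i = 0 := by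
  let row : Module.Dual ℝ (n → ℝ) := LinearMap.proj i ∘ₗ B.mulVecLin
  have hle : (affineSpan ℝ {x ∈ Q | (B *ᵥ x) i = d i}).direction ≤
      LinearMap.ker A.mulVecLin ⊓ LinearMap.ker row :=
    le_inf ((AffineSubspace.direction_le (affineSpan_mono ℝ (Set.sep_subset _ _))).trans_eq
      (hQ.direction_eq hv)) (direction_affineSpan_le_ker fun x hx => hx.2)
  have hlt : LinearMap.ker A.mulVecLin ⊓ LinearMap.ker row < LinearMap.ker A.mulVecLin := by
    obtain ⟨w, hw, hwi⟩ := hQ.exists_mulVec_neg hv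
    refine inf_le_left.lt_of_not_ge fun h => (hwi i hi).ne (h hw).2
  have hrank := Submodule.finrank_lt_finrank_of_lt hlt
  have hfacet := (hQ.2.2 i).2
  rw [spanDim, spanDim, hQ.direction_eq hv] at hfacet
  rw [Submodule.eq_of_le_of_finrank_le hle (by omega)]
  rfl

lemma exists_pos_forall_mulVec_eq_mul (hQ : Irredundant A b B d Q) (hv : v ∈ Q) {i j : q}
    (hi : (B *ᵥ v) i = d i) (hj : (B *ᵥ v) j = d j)
    (hij : {x ∈ Q | (B *ᵥ x) i = d i} = {x ∈ Q | (B *ᵥ x) j = d j}) :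
    ∃ c : ℝ, 0 < c ∧ ∀ x, A *ᵥ x = 0 → (B *ᵥ x) j = c * (B *ᵥ x) i := by
  obtain ⟨w, hAw, hw⟩ := hQ.exists_mulVec_neg hv
  refine ⟨(B *ᵥ w) j / (B *ᵥ w) i, div_pos_of_neg_of_neg (hw j hj) (hw i hi), fun x hx => ?_⟩
  have hne := (hw i hi).ne
  have hdir := (hQ.mem_direction_row_iff (u := x - ((B *ᵥ x) i / (B *ᵥ w) i) • w) hv hi).2
    ⟨by simp [mulVec_sub, mulVec_smul, hx, hAw], by simp [mulVec_sub, mulVec_smul, hne]⟩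
  rw [hij, hQ.mem_direction_row_iff hv hj] at hdir
  have := hdir.2
  simp only [mulVec_sub, mulVec_smul, Pi.sub_apply, Pi.smul_apply, smul_eq_mul] at this
  rw [sub_eq_zero.1 this]
  ring

end Irredundant

section Circuits

variable {p q n : Type*} [Fintype n] {A : Matrix p n ℝ} {B : Matrix q n ℝ} {g y : n → ℝ}

lemma mem_circuits_of_forall_eq_smul (hAg : A *ᵥ g = 0) (hg : g ≠ 0)
    (h : ∀ y, A *ᵥ y = 0 → {i | (B *ᵥ y) i ≠ 0} ⊆ {i | (B *ᵥ g) i ≠ 0} → ∃ a : ℝ, y = a • g) :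
    g ∈ circuits A B := by
  refine ⟨hAg, hg, fun y hAy hy hsupp i hi => ?_⟩
  obtain ⟨a, rfl⟩ := h y hAy hsupp
  simpa [mulVec_smul, left_ne_zero_of_smul hy] using hi

lemma exists_eq_smul_of_mem_circuits (hker : ∀ u, A *ᵥ u = 0 → B *ᵥ u = 0 → u = 0)
    (hg : g ∈ circuits A B) (hAy : A *ᵥ y = 0)
    (hsupp : {i | (B *ᵥ y) i ≠ 0} ⊆ {i | (B *ᵥ g) i ≠ 0}) : ∃ a : ℝ, y = a • g := by
  obtain ⟨hAg, hg0, hmin⟩ := hg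
  obtain ⟨i, hi⟩ : ∃ i, (B *ᵥ g) i ≠ 0 := Function.ne_iff.1 fun h => hg0 (hker g hAg h)
  let a := (B *ᵥ y) i / (B *ᵥ g) i
  have hAw : A *ᵥ (y - a • g) = 0 := by simp [mulVec_sub, mulVec_smul, hAy, hAg]
  have hBw : (B *ᵥ (y - a • g)) i = 0 := by simp [mulVec_sub, mulVec_smul, a, hi]
  refine ⟨a, sub_eq_zero.1 (by_contra fun hw => hmin _ hAw hw (fun j hj hgj => hj ?_) hi hBw)⟩
  have hyj : (B *ᵥ y) j = 0 := by_contra fun h => hsupp h hgj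
  simp [mulVec_sub, mulVec_smul, hyj, hgj]

lemma finite_setOf_ratio_circuits [Finite q] (hker : ∀ u, A *ᵥ u = 0 → B *ᵥ u = 0 → u = 0)
    (f g : Module.Dual ℝ (LinearMap.ker A.mulVecLin)) :
    {ρ : ℝ | ∃ c : LinearMap.ker A.mulVecLin,
      ↑c ∈ circuits A B ∧ f c ≠ 0 ∧ g c = ρ * f c}.Finite := by
  rw [← Set.finite_coe_iff]
  choose c hc hf hg using fun ρ : {ρ : ℝ | ∃ c : LinearMap.ker A.mulVecLin,
    ↑c ∈ circuits A B ∧ f c ≠ 0 ∧ g c = ρ * f c} => ρ.2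
  refine Finite.of_injective (fun ρ => {i | (B *ᵥ (c ρ : n → ℝ)) i ≠ 0}) fun ρ σ hsupp => ?_
  obtain ⟨a, ha⟩ := exists_eq_smul_of_mem_circuits hker (hc σ) (hc ρ).1 hsupp.subset
  have hρσ : c ρ = a • c σ := Subtype.ext ha
  refine Subtype.ext (mul_right_cancel₀ (hf ρ) ?_)
  calc ρ * f (c ρ) = a * g (c σ) := by rw [← hg, hρσ, map_smul, smul_eq_mul]
    _ = σ * f (c ρ) := by rw [hg, hρσ, map_smul, smul_eq_mul, mul_left_comm]

end Circuits

/-- Linear coordinates `Φ` on the subspace `V` in which the cone of feasible directions of `Q` at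
`v` becomes the nonnegative orthant. -/
def IsOrthantChart {E K : Type*} [AddCommGroup E] [Module ℝ E] {V : Submodule ℝ E} (Q : Set E)
    (v : E) (Φ : V ≃ₗ[ℝ] (K → ℝ)) : Prop :=
  ∀ x : V, (x : E) ∈ feasibleDirections Q v ↔ 0 ≤ Φ x

section Vertices

variable {n : Type*} [Fintype n] {Q : Set (n → ℝ)} {v u : n → ℝ}

lemma IsVertex.mem (hv : IsVertex Q v) : v ∈ Q :=
  IsFace.subset hv rfl

lemma IsVertex.eq_zero_of_mem_feasibleDirections (hv : IsVertex Q v)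
    (hu : u ∈ feasibleDirections Q v) (hneg : -u ∈ feasibleDirections Q v) : u = 0 := by
  obtain ⟨ε, hε, hmem⟩ := hu
  obtain ⟨δ, hδ, hmem'⟩ := hneg
  suffices v + ε • u ∈ ({v} : Set (n → ℝ)) by simpa [hε.ne'] using this
  rcases hv with hv | ⟨c, s, hle, -, hv⟩
  · rwa [hv]
  · have hvs : c ⬝ᵥ v = s := (hv.subset rfl).2
    have h₁ := hle _ hmem
    have h₂ := hle _ hmem'
    simp only [dotProduct_add, dotProduct_smul, dotProduct_neg, smul_eq_mul, hvs] at h₁ h₂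
    have hcu : c ⬝ᵥ u = 0 := by
      refine le_antisymm (nonpos_of_mul_nonpos_right (by linarith) hε) ?_
      exact neg_nonpos.1 (nonpos_of_mul_nonpos_right (by linarith) hδ)
    rw [hv]
    exact ⟨hmem, by simp [hvs, hcu]⟩

namespace Irredundant

variable {p q : Type*} {A : Matrix p n ℝ} {b : p → ℝ} {B : Matrix q n ℝ} {d : q → ℝ} [Finite q]

lemma eq_zero_of_isVertex (hQ : Irredundant A b B d Q) (hv : IsVertex Q v) (hAu : A *ᵥ u = 0)
    (hBu : ∀ i, (B *ᵥ v) i = d i → (B *ᵥ u) i = 0) : u = 0 :=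
  hv.eq_zero_of_mem_feasibleDirections
    ((hQ.mem_feasibleDirections_iff hv.mem).2 ⟨hAu, fun i hi => (hBu i hi).le⟩)
    ((hQ.mem_feasibleDirections_iff hv.mem).2
      ⟨by rw [mulVec_neg, hAu, neg_zero], fun i hi => by simp [mulVec_neg, hBu i hi]⟩)

lemma exists_tight_rows (hQ : Irredundant A b B d Q) (hv : v ∈ Q) {k : ℕ}
    (hcard : {F | IsFacet Q F ∧ v ∈ F}.ncard = k) :
    ∃ r : Fin k → q, (∀ j, (B *ᵥ v) (r j) = d (r j)) ∧ ∀ i, (B *ᵥ v) i = d i →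
      ∃ j, ∃ c : ℝ, 0 < c ∧ ∀ x, A *ᵥ x = 0 → (B *ᵥ x) i = c * (B *ᵥ x) (r j) := by
  have row_of_facet (F : {F | IsFacet Q F ∧ v ∈ F}) :
      ∃ i, (B *ᵥ v) i = d i ∧ {x ∈ Q | (B *ᵥ x) i = d i} = F := by
    obtain ⟨F, hF, hvF⟩ := F
    obtain ⟨i, rfl⟩ := hQ.exists_row_eq_of_isFacet hF
    exact ⟨i, hvF.2, rfl⟩
  choose row htight hrow using row_of_facet
  have row_injective : Function.Injective row := fun F G h => by
    ext1
    rw [← hrow F, ← hrow G, h]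
  have := Finite.of_injective row row_injective
  let index := Finite.equivFinOfCardEq hcard
  refine ⟨row ∘ index.symm, fun j => htight _, fun i hi => ?_⟩
  let F : {F | IsFacet Q F ∧ v ∈ F} := ⟨{x ∈ Q | (B *ᵥ x) i = d i}, hQ.2.2 i, hv, hi⟩
  refine ⟨index F, hQ.exists_pos_forall_mulVec_eq_mul hv (htight _) hi ?_⟩
  rw [Function.comp_apply, hrow, index.symm_apply_apply]

theorem exists_isOrthantChart (hQ : Irredundant A b B d Q) (hv : IsVertex Q v)
    (hcard : {F | IsFacet Q F ∧ v ∈ F}.ncard = spanDim Q) :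
    ∃ Φ : LinearMap.ker A.mulVecLin ≃ₗ[ℝ] (Fin (spanDim Q) → ℝ), IsOrthantChart Q v Φ := by
  obtain ⟨r, hr, hrow⟩ := hQ.exists_tight_rows hv.mem hcard
  let slack : LinearMap.ker A.mulVecLin →ₗ[ℝ] (Fin (spanDim Q) → ℝ) :=
    -(LinearMap.funLeft ℝ ℝ r ∘ₗ B.mulVecLin ∘ₗ Submodule.subtype _)
  have slack_apply (x : LinearMap.ker A.mulVecLin) (j) :
      slack x j = -(B *ᵥ (x : n → ℝ)) (r j) := rfl
  have slack_injective : Function.Injective slack := by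
    rw [← LinearMap.ker_eq_bot, LinearMap.ker_eq_bot']
    refine fun x hx => Subtype.ext (hQ.eq_zero_of_isVertex hv x.2 fun i hi => ?_)
    obtain ⟨j, c, -, hc⟩ := hrow i hi
    rw [hc _ x.2, ← neg_eq_zero, ← mul_neg, ← slack_apply, hx, Pi.zero_apply, mul_zero]
  have hdim : Module.finrank ℝ (LinearMap.ker A.mulVecLin) =
      Module.finrank ℝ (Fin (spanDim Q) → ℝ) := by
    rw [Module.finrank_fin_fun, ← hQ.direction_eq hv.mem]
    rfl
  refine ⟨LinearEquiv.ofInjectiveOfFinrankEq slack slack_injective hdim, fun x => ?_⟩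
  rw [hQ.mem_feasibleDirections_iff hv.mem]
  refine ⟨fun ⟨_, hx⟩ j => neg_nonneg.2 (hx _ (hr j)), fun hx => ⟨x.2, fun i hi => ?_⟩⟩
  obtain ⟨j, c, hc, hij⟩ := hrow i hi
  rw [hij _ x.2]
  exact mul_nonpos_of_nonneg_of_nonpos hc.le (neg_nonneg.1 (hx j))

end Irredundant

end Vertices

section ProjectsAlong

variable {E F : Type*} [AddCommGroup E] [Module ℝ E] [AddCommGroup F] [Module ℝ F]
  {V : Submodule ℝ E} {z : V} {π : E →ₗ[ℝ] F}

/-- `π` maps the subspace `V` onto its codomain, and collapses exactly the line in `V` spanned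
by `z`. -/
def ProjectsAlong (π : E →ₗ[ℝ] F) (z : V) : Prop :=
  Function.Surjective (π.domRestrict V) ∧ LinearMap.ker (π.domRestrict V) = ℝ ∙ z

lemma exists_projectsAlong [FiniteDimensional ℝ E] (hz : z ≠ 0) {k : ℕ}
    (hk : Module.finrank ℝ V = k + 1) : ∃ π : E →ₗ[ℝ] (Fin k → ℝ), ProjectsAlong π z := by
  have hdim : Module.finrank ℝ (V ⧸ ℝ ∙ z) = Module.finrank ℝ (Fin k → ℝ) := by
    rw [Module.finrank_fin_fun, Submodule.finrank_quotient, finrank_span_singleton hz, hk,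
      Nat.add_sub_cancel]
  let e := LinearEquiv.ofFinrankEq _ _ hdim
  obtain ⟨π, hπ⟩ := LinearMap.exists_extend (e.toLinearMap ∘ₗ (ℝ ∙ z).mkQ)
  refine ⟨π, ?_⟩
  rw [ProjectsAlong, LinearMap.domRestrict, hπ]
  exact ⟨e.surjective.comp (Submodule.mkQ_surjective _), by simp [LinearMap.ker_comp]⟩

namespace ProjectsAlong

lemma exists_eq (hπ : ProjectsAlong π z) (y : F) : ∃ x : V, π x = y :=
  hπ.1 y

lemma map_eq_zero_iff (hπ : ProjectsAlong π z) {x : V} : π x = 0 ↔ ∃ t : ℝ, t • z = x := by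
  rw [← Submodule.mem_span_singleton, ← hπ.2, LinearMap.mem_ker, LinearMap.domRestrict_apply]

lemma map_self (hπ : ProjectsAlong π z) : π z = 0 :=
  hπ.map_eq_zero_iff.2 ⟨1, one_smul ℝ z⟩

lemma exists_dual_forall_map_eq (hπ : ProjectsAlong π z) {f : Module.Dual ℝ V} (hf : f z = 0) :
    ∃ g : Module.Dual ℝ F, ∀ x : V, g (π x) = f x := by
  obtain ⟨lift, hlift⟩ :=
    LinearMap.exists_rightInverse_of_surjective _ (LinearMap.range_eq_top.2 hπ.1)
  refine ⟨f ∘ₗ lift, fun x => ?_⟩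
  have hx : π ↑(lift (π x) - x) = 0 := by
    rw [AddSubgroupClass.coe_sub, map_sub, sub_eq_zero]
    exact LinearMap.congr_fun hlift (π x)
  obtain ⟨t, ht⟩ := hπ.map_eq_zero_iff.1 hx
  rw [LinearMap.comp_apply, ← sub_eq_zero, ← map_sub, ← ht, map_smul, hf, smul_zero]

lemma affineSpan_image_eq_top (hπ : ProjectsAlong π z) {S : Set E} (hS : S.Nonempty)
    (hSV : (affineSpan ℝ S).direction = V) : affineSpan ℝ (π '' S) = ⊤ := by
  refine (AffineSubspace.direction_eq_top_iff_of_nonempty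
    ((hS.image π).affineSpan ℝ)).1 ?_
  rw [← LinearMap.coe_toAffineMap, ← AffineSubspace.map_span, AffineSubspace.map_direction, hSV,
    LinearMap.toAffineMap_linear, ← LinearMap.range_domRestrict, LinearMap.range_eq_top]
  exact hπ.1

end ProjectsAlong

end ProjectsAlong

lemma exists_forall_eq_mul_of_forall_pos_neg {K : Type*} {ζ w : K → ℝ} {S : Set K}
    (hζ : ∀ k, ζ k ≠ 0) (hpos : ∃ i ∈ S, 0 < ζ i) (hneg : ∃ j ∈ S, ζ j < 0)
    (h : ∀ i ∈ S, ∀ j ∈ S, 0 < ζ i → ζ j < 0 → ζ j * w i = ζ i * w j) :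
    ∃ a, ∀ k ∈ S, w k = a * ζ k := by
  obtain ⟨i, hiS, hi⟩ := hpos
  obtain ⟨j, hjS, hj⟩ := hneg
  have eq_neg (k) (hkS : k ∈ S) (hk : ζ k < 0) : w k = w i / ζ i * ζ k := by
    have := h i hiS k hkS hi hk
    field_simp
    linarith
  refine ⟨w i / ζ i, fun k hkS => (hζ k).lt_or_gt.elim (eq_neg k hkS) fun hk => ?_⟩
  refine mul_left_cancel₀ hj.ne ?_
  rw [h k hkS j hjS hk hj, eq_neg j hjS hj]
  ring

section ProjectedChart

variable {E F K : Type*} [AddCommGroup E] [Module ℝ E] [AddCommGroup F] [Module ℝ F]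
  {V : Submodule ℝ E} {Q : Set E} {v : E} {Φ : V ≃ₗ[ℝ] (K → ℝ)} {z : V} {i j : K}

namespace IsOrthantChart

lemma map_sub_nonneg (hΦ : IsOrthantChart Q v Φ) {x : E} (hx : x ∈ Q) (hxv : x - v ∈ V) :
    0 ≤ Φ ⟨x - v, hxv⟩ :=
  (hΦ _).1 ⟨1, one_pos, by simpa using hx⟩

section Face

variable {π : E →ₗ[ℝ] F} {g : Module.Dual ℝ F}

lemma mem_direction_of_apply_eq_zero (hΦ : IsOrthantChart Q v Φ) (hv : v ∈ Q)
    (hg : ∀ x : V, g (π x) = Φ z j * Φ x i - Φ z i * Φ x j) {x : V} (hxi : Φ x i = 0)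
    (hxj : Φ x j = 0) : π x ∈ (affineSpan ℝ {y ∈ π '' Q | g y = g (π v)}).direction := by
  have of_nonneg (w : K → ℝ) (hw : 0 ≤ w) (hwi : w i = 0) (hwj : w j = 0) :
      π (Φ.symm w) ∈ (affineSpan ℝ {y ∈ π '' Q | g y = g (π v)}).direction := by
    refine mem_direction_of_mem_feasibleDirections (v := π v) ⟨Set.mem_image_of_mem π hv, rfl⟩ ?_
    refine (mem_feasibleDirections_sep_eq_iff rfl).2 ⟨map_mem_feasibleDirections ?_ π, ?_⟩
    · exact (hΦ _).2 (by rwa [Φ.apply_symm_apply])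
    · rw [hg, Φ.apply_symm_apply, hwi, hwj, mul_zero, mul_zero, sub_zero]
  have x_eq : x = Φ.symm (Φ x)⁺ - Φ.symm (Φ x)⁻ := by
    rw [← map_sub, posPart_sub_negPart, Φ.symm_apply_apply]
  rw [x_eq, AddSubgroupClass.coe_sub, map_sub]
  exact sub_mem (of_nonneg _ (posPart_nonneg _) (by simp [hxi]) (by simp [hxj]))
    (of_nonneg _ (negPart_nonneg _) (by simp [hxi]) (by simp [hxj]))

-- Modulo `z`, every direction killed by `g` has vanishing coordinates `i` and `j`.
lemma ker_le_direction (hΦ : IsOrthantChart Q v Φ) (hv : v ∈ Q) (hπ : ProjectsAlong π z)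
    (hi : Φ z i ≠ 0) (hg : ∀ x : V, g (π x) = Φ z j * Φ x i - Φ z i * Φ x j) :
    LinearMap.ker g ≤ (affineSpan ℝ {y ∈ π '' Q | g y = g (π v)}).direction := by
  intro y hy
  obtain ⟨x, rfl⟩ := hπ.exists_eq y
  have hgx : Φ z j * Φ x i = Φ z i * Φ x j := sub_eq_zero.1 ((hg x).symm.trans hy)
  let t := Φ x i / Φ z i
  have hxi : Φ (x - t • z) i = 0 := by simp [t, hi]
  have hxj : Φ (x - t • z) j = 0 := by
    simp only [map_sub, map_smul, Pi.sub_apply, Pi.smul_apply, smul_eq_mul, t]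
    field_simp
    linarith
  simpa [hπ.map_self] using hΦ.mem_direction_of_apply_eq_zero hv hg hxi hxj

lemma apply_map_le (hΦ : IsOrthantChart Q v Φ) (hv : v ∈ Q)
    (hQV : (affineSpan ℝ Q).direction = V) (hi : 0 ≤ Φ z i) (hj : Φ z j ≤ 0)
    (hg : ∀ x : V, g (π x) = Φ z j * Φ x i - Φ z i * Φ x j) :
    ∀ y ∈ π '' Q, g y ≤ g (π v) := by
  rintro _ ⟨x, hx, rfl⟩
  have hxv : x - v ∈ V :=
    hQV ▸ AffineSubspace.vsub_mem_direction (mem_affineSpan ℝ hx) (mem_affineSpan ℝ hv)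
  have hnonneg := hΦ.map_sub_nonneg hx hxv
  rw [← sub_nonpos, ← map_sub, ← map_sub, hg ⟨x - v, hxv⟩]
  exact sub_nonpos.2 ((mul_nonpos_of_nonpos_of_nonneg hj (hnonneg i)).trans
    (mul_nonneg hi (hnonneg j)))

end Face

variable {m p q : Type*} [Fintype m] {π : E →ₗ[ℝ] (m → ℝ)} {A : Matrix p m ℝ} {b : p → ℝ}
  {B : Matrix q m ℝ} {d : q → ℝ}

lemma isFacet_image (hΦ : IsOrthantChart Q v Φ) (hv : v ∈ Q)
    (hQV : (affineSpan ℝ Q).direction = V) (hπ : ProjectsAlong π z) (hi : 0 < Φ z i)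
    (hj : Φ z j < 0) {g : Module.Dual ℝ (m → ℝ)}
    (hg : ∀ x : V, g (π x) = Φ z j * Φ x i - Φ z i * Φ x j) :
    IsFacet (π '' Q) {y ∈ π '' Q | g y = g (π v)} := by
  classical
  have hg_ne : g ≠ 0 := by
    rintro rfl
    have hij : j ≠ i := by
      rintro rfl
      exact lt_asymm hi hj
    have := hg (Φ.symm (Pi.single i 1))
    exact hj.ne' (by simpa [hij] using this)
  exact isFacet_of_ker_le_direction (hπ.affineSpan_image_eq_top ⟨v, hv⟩ hQV) hg_ne
    (hΦ.apply_map_le hv hQV hi.le hj.le hg) ⟨_, Set.mem_image_of_mem π hv, rfl⟩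
    (hΦ.ker_le_direction hv hπ hi.ne' hg)

lemma exists_row_eq_zero_iff [Finite q] (hΦ : IsOrthantChart Q v Φ) (hv : v ∈ Q)
    (hQV : (affineSpan ℝ Q).direction = V) (hπ : ProjectsAlong π z)
    (hP : Irredundant A b B d (π '' Q)) (hi : 0 < Φ z i) (hj : Φ z j < 0) :
    ∃ r, ∀ x : V, (B *ᵥ π x) r = 0 ↔ Φ z j * Φ x i = Φ z i * Φ x j := by
  let f : Module.Dual ℝ V :=
    (Φ z j • LinearMap.proj i - Φ z i • LinearMap.proj j) ∘ₗ Φ.toLinearMap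
  obtain ⟨g, hg⟩ := hπ.exists_dual_forall_map_eq (f := f) (by simp [f, mul_comm])
  obtain ⟨r, hr⟩ := hP.exists_row_eq_of_isFacet (hΦ.isFacet_image hv hQV hπ hi hj hg)
  have hvP := Set.mem_image_of_mem π hv
  have htight : (B *ᵥ π v) r = d r := (hr.subset ⟨hvP, rfl⟩).2
  refine ⟨r, fun x => Iff.trans ?_ sub_eq_zero⟩
  calc (B *ᵥ π x) r = 0
      ↔ π x ∈ (affineSpan ℝ {y ∈ π '' Q | (B *ᵥ y) r = d r}).direction := by
        rw [hP.mem_direction_row_iff hvP htight, and_iff_right (hP.mulVec_eq_zero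
          (hπ.affineSpan_image_eq_top ⟨v, hv⟩ hQV) _)]
    _ ↔ π x ∈ LinearMap.ker g := by
        rw [← hr]
        exact ⟨fun h => direction_affineSpan_le_ker (fun y hy => hy.2) h,
          fun h => hΦ.ker_le_direction hv hπ hi.ne' hg h⟩
    _ ↔ Φ z j * Φ x i - Φ z i * Φ x j = 0 := by rw [LinearMap.mem_ker, hg]; rfl

theorem map_indicator_mem_circuits [Finite q] (hΦ : IsOrthantChart Q v Φ)
    (hv : v ∈ Q) (hQV : (affineSpan ℝ Q).direction = V) (hπ : ProjectsAlong π z)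
    (hP : Irredundant A b B d (π '' Q)) (hz : ∀ k, Φ z k ≠ 0) {S : Set K}
    (hpos : ∃ i ∈ S, 0 < Φ z i) (hneg : ∃ j ∈ S, Φ z j < 0)
    (hpos' : ∃ i ∈ Sᶜ, 0 < Φ z i) (hneg' : ∃ j ∈ Sᶜ, Φ z j < 0) :
    π (Φ.symm (S.indicator (Φ z))) ∈ circuits A B := by
  let g := Φ.symm (S.indicator (Φ z))
  have hg (k) (hk : k ∈ S) : Φ g k = Φ z k := by simp [g, hk]
  have hg' (k) (hk : k ∉ S) : Φ g k = 0 := by simp [g, hk]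
  refine mem_circuits_of_forall_eq_smul
    (hP.mulVec_eq_zero (hπ.affineSpan_image_eq_top ⟨v, hv⟩ hQV) _) (fun h => ?_) fun y _ hy => ?_
  · obtain ⟨t, ht : t • z = g⟩ := hπ.map_eq_zero_iff.1 h
    obtain ⟨i, hiS, -⟩ := hpos
    obtain ⟨j, hjS, -⟩ := hpos'
    have hi := hg i hiS
    have hj := hg' j hjS
    rw [← ht] at hi hj
    obtain rfl : t = 0 := by simpa [hz j] using hj
    exact hz i (by simpa using hi.symm)
  obtain ⟨x, rfl⟩ := hπ.exists_eq y
  have cross (i j : K) (hij : Φ z j * Φ g i = Φ z i * Φ g j) (hi : 0 < Φ z i)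
      (hj : Φ z j < 0) : Φ z j * Φ x i = Φ z i * Φ x j := by
    obtain ⟨r, hr⟩ := hΦ.exists_row_eq_zero_iff hv hQV hπ hP hi hj
    exact (hr x).1 (by_contra fun h => hy h ((hr g).2 hij))
  obtain ⟨a, ha⟩ := exists_forall_eq_mul_of_forall_pos_neg hz hpos hneg fun i hi j hj =>
    cross i j (by rw [hg i hi, hg j hj, mul_comm])
  obtain ⟨a', ha'⟩ := exists_forall_eq_mul_of_forall_pos_neg hz hpos' hneg' fun i hi j hj =>
    cross i j (by rw [hg' i hi, hg' j hj, mul_zero, mul_zero])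
  have x_eq : x = (a - a') • g + a' • z := Φ.injective <| funext fun k => by
    by_cases hk : k ∈ S
    · simp [ha k hk, hg k hk, ← add_mul]
    · simp [ha' k hk, hg' k hk]
  exact ⟨a - a', by simp [x_eq, hπ.map_self, g]⟩

end IsOrthantChart

end ProjectedChart

section Ratios

variable {n m p q K : Type*} [Fintype n] {A : Matrix p n ℝ} {B : Matrix q n ℝ}
  {Φ : LinearMap.ker A.mulVecLin ≃ₗ[ℝ] (K → ℝ)}

lemma exists_neg_forall_circuits_ne_mul [Finite q] [Finite K]
    (hker : ∀ u, A *ᵥ u = 0 → B *ᵥ u = 0 → u = 0) :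
    ∃ ρ < 0, ∀ c : LinearMap.ker A.mulVecLin, ↑c ∈ circuits A B → ∀ i j,
      Φ c i ≠ 0 → Φ c j ≠ ρ * Φ c i := by
  have hfin : (⋃ (i) (j), {ρ : ℝ | ∃ c : LinearMap.ker A.mulVecLin,
      ↑c ∈ circuits A B ∧ Φ c i ≠ 0 ∧ Φ c j = ρ * Φ c i}).Finite :=
    Set.finite_iUnion fun i => Set.finite_iUnion fun j => finite_setOf_ratio_circuits hker
      (LinearMap.proj i ∘ₗ Φ.toLinearMap) (LinearMap.proj j ∘ₗ Φ.toLinearMap)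
  obtain ⟨ρ, hρ, hmem⟩ := (Set.Iio_infinite (0 : ℝ)).exists_notMem_finite hfin
  exact ⟨ρ, hρ, fun c hc i j hi hj => hmem (Set.mem_iUnion₂.2 ⟨i, j, c, hc, hi, hj⟩)⟩

lemma ProjectsAlong.map_notMem_image_circuits {π : (n → ℝ) →ₗ[ℝ] (m → ℝ)}
    {z g : LinearMap.ker A.mulVecLin} (hπ : ProjectsAlong π z) {ρ : ℝ}
    (hρ : ∀ c : LinearMap.ker A.mulVecLin, ↑c ∈ circuits A B → ∀ i j,
      Φ c i ≠ 0 → Φ c j ≠ ρ * Φ c i)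
    {i j k l : K} (hgi : Φ g i ≠ 0) (hgj : Φ g j = ρ * Φ g i) (hgk : Φ g k = 0)
    (hgl : Φ g l = 0) (hzk : Φ z k ≠ 0) (hzl : Φ z l = ρ * Φ z k) :
    π g ∉ π '' circuits A B := by
  rintro ⟨c, hc, hcg⟩
  lift c to LinearMap.ker A.mulVecLin using hc.1
  have hsub : π ↑(c - g) = 0 := by rw [AddSubgroupClass.coe_sub, map_sub, hcg, sub_self]
  obtain ⟨t, ht⟩ := hπ.map_eq_zero_iff.1 hsub
  obtain rfl : c = g + t • z := by rw [ht, add_sub_cancel]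
  obtain rfl | ht := eq_or_ne t 0
  · exact hρ _ hc i j (by simpa using hgi) (by simpa using hgj)
  · refine hρ _ hc k l (by simp [hgk, ht, hzk]) ?_
    simp only [map_add, map_smul, Pi.add_apply, Pi.smul_apply, smul_eq_mul, hgk, hgl, hzl]
    ring

end Ratios

theorem Irredundant.exists_forall_projectsAlong_not_subset {n p q K : Type*} [Fintype n]
    [Finite q] [Finite K] {A : Matrix p n ℝ} {b : p → ℝ} {B : Matrix q n ℝ} {d : q → ℝ}
    {Q : Set (n → ℝ)} {v : n → ℝ} (hQ : Irredundant A b B d Q) (hv : IsVertex Q v)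
    {Φ : LinearMap.ker A.mulVecLin ≃ₗ[ℝ] (K → ℝ)} (hΦ : IsOrthantChart Q v Φ) (e : Fin 4 ↪ K) :
    ∃ z : LinearMap.ker A.mulVecLin, z ≠ 0 ∧ ∀ {m p' q' : Type*} [Fintype m] [Finite q']
      {π : (n → ℝ) →ₗ[ℝ] (m → ℝ)} {A' : Matrix p' m ℝ} {b' : p' → ℝ} {B' : Matrix q' m ℝ}
      {d' : q' → ℝ}, ProjectsAlong π z → Irredundant A' b' B' d' (π '' Q) →
        ¬ circuits A' B' ⊆ π '' circuits A B := by
  classical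
  obtain ⟨ρ, hρ, hratio⟩ := exists_neg_forall_circuits_ne_mul (Φ := Φ)
    fun u hAu hBu => hQ.eq_zero_of_isVertex hv hAu fun i _ => congr_fun hBu i
  let ζ (k : K) : ℝ := if k ∈ ({e 0, e 2} : Set K) then 1 else ρ
  let S : Set K := {e 0, e 1}
  have hζ (k) : ζ k ≠ 0 := by
    dsimp only [ζ]
    split_ifs
    exacts [one_ne_zero, hρ.ne]
  refine ⟨Φ.symm ζ, fun h => hζ (e 0) ?_, fun {m p' q' _ _ π A' b' B' d'} hπ hP hsub => ?_⟩
  · rw [← Φ.apply_symm_apply ζ, h, map_zero, Pi.zero_apply]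
  refine hπ.map_notMem_image_circuits (g := Φ.symm (S.indicator ζ)) hratio
    (i := e 0) (j := e 1) (k := e 2) (l := e 3) (by simp [S, ζ]) (by simp [S, ζ])
    (by simp [S]) (by simp [S]) (by simp [ζ]) (by simp [ζ]) (hsub ?_)
  have := hΦ.map_indicator_mem_circuits (S := S) hv.mem (hQ.direction_eq hv.mem) hπ hP
  simp only [LinearEquiv.apply_symm_apply] at this
  exact this hζ ⟨e 0, by simp [S, ζ]⟩ ⟨e 1, by simp [S, ζ, hρ]⟩ ⟨e 2, by simp [S, ζ]⟩
    ⟨e 3, by simp [S, ζ, hρ]⟩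

theorem stmt_18_general {n p q : Type*} [Fintype n] [Finite p] [Finite q] {A : Matrix p n ℝ}
    {b : p → ℝ} {B : Matrix q n ℝ} {d : q → ℝ} {Q : Set (n → ℝ)}
    (hQ : Irredundant A b B d Q) (hdim : 4 ≤ spanDim Q)
    (hvert : ∃ v, IsVertex Q v ∧ {F | IsFacet Q F ∧ v ∈ F}.ncard = spanDim Q) :
    ∃ π : (n → ℝ) →ₗ[ℝ] (Fin (spanDim Q - 1) → ℝ),
      spanDim (π '' Q) = spanDim Q - 1 ∧
      (∃ (k : ℕ) (B' : Matrix (Fin k) (Fin (spanDim Q - 1)) ℝ) (d' : Fin k → ℝ),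
        Irredundant (0 : Matrix (Fin 0) (Fin (spanDim Q - 1)) ℝ) 0 B' d' (π '' Q)) ∧
      ∀ {p' q' : Type*} [Finite q'] {A' : Matrix p' (Fin (spanDim Q - 1)) ℝ} {b' : p' → ℝ}
        {B' : Matrix q' (Fin (spanDim Q - 1)) ℝ} {d' : q' → ℝ},
        Irredundant A' b' B' d' (π '' Q) → ¬ circuits A' B' ⊆ π '' circuits A B := by
  obtain ⟨v, hv, hcard⟩ := hvert
  obtain ⟨Φ, hΦ⟩ := hQ.exists_isOrthantChart hv hcard
  obtain ⟨z, hz, hnot⟩ :=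
    hQ.exists_forall_projectsAlong_not_subset hv hΦ (Fin.castLEEmb hdim)
  obtain ⟨π, hπ⟩ := exists_projectsAlong hz (k := spanDim Q - 1) (by
    rw [Φ.finrank_eq, Module.finrank_fin_fun]
    omega)
  have hspan := hπ.affineSpan_image_eq_top ⟨v, hv.mem⟩ (hQ.direction_eq hv.mem)
  have hpoly : IsHPolyhedron (π '' Q) := hQ.1 ▸ (isHPolyhedron_polySet A b B d).image π
  refine ⟨π, ?_, hpoly.exists_irredundant hspan, hnot hπ⟩
  rw [spanDim, hspan, AffineSubspace.direction_top, finrank_top, Module.finrank_fin_fun]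

/-- If `Q` (with an irredundant description) has `dim Q ≥ 4` and a
non-degenerate vertex (a vertex lying in exactly `dim Q` facets), then there is a linear map
`π : ℝᵐ → ℝ^{dim Q - 1}` such that `π(Q)` is full-dimensional and, for some irredundant
description of `π(Q)`, `C(π(Q)) ⊄ π(C(Q))`. -/
theorem stmt_18 {m pQ qQ : ℕ}
    (AQ : Matrix (Fin pQ) (Fin m) ℝ) (bQ : Fin pQ → ℝ)
    (BQ : Matrix (Fin qQ) (Fin m) ℝ) (dQ : Fin qQ → ℝ)
    (Q : Set (Fin m → ℝ)) (hQirr : Irredundant AQ bQ BQ dQ Q)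
    (hdim : 4 ≤ spanDim Q)
    (hvert : ∃ v, IsVertex Q v ∧ {F | IsFacet Q F ∧ v ∈ F}.ncard = spanDim Q) :
    ∃ π : (Fin m → ℝ) →ₗ[ℝ] (Fin (spanDim Q - 1) → ℝ),
      spanDim ((fun x => π x) '' Q) = spanDim Q - 1 ∧
      ∃ (pP qP : ℕ)
        (AP : Matrix (Fin pP) (Fin (spanDim Q - 1)) ℝ) (bP : Fin pP → ℝ)
        (BP : Matrix (Fin qP) (Fin (spanDim Q - 1)) ℝ) (dP : Fin qP → ℝ),
        Irredundant AP bP BP dP ((fun x => π x) '' Q) ∧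
        ¬ (circuits AP BP ⊆ (fun x => π x) '' circuits AQ BQ) := by
  obtain ⟨π, hspan, ⟨k, B', d', hP⟩, hnot⟩ := stmt_18_general hQirr hdim hvert
  exact ⟨π, hspan, 0, k, 0, 0, B', d', hP, hnot hP⟩
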